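/- (AY-sequential selection.) Let A be a binary treatment with potential outcomes Y_0, Y_1, let the observed outcome Y satisfy consistency, and let V = (V_i)_{i ∈ I} be a finite family of covariates such that V_I controls for confounding (Y_a ⊥⊥ A | V_I for a = 0, 1) and the joint law of (A, (V_i)_{i ∈ I}) is absolutely continuous with respect to P_A ⊗ ⨂_{i ∈ I} P_{V_i} with a density that is positive almost everywhere. Let C_AY = R_{Y|A}(V_{R_A(V)}), the outcome Markov boundary of the subfamily indexed by the treatment Markov boundary of V. Then Y_a ⊥⊥ A | V_{C_AY} for a = 0, 1. -/

import Mathlib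

/-!
Write `R` for the treatment Markov boundary `R_A(V)` and `C` for `R_{Y|A}(V_R)`. All conditional
independences are handled in one-sided form: `X ⊥⊥ U | W` holds iff each `P(X ∈ B | W, U)` has a
`σ(W)`-measurable version (`condIndepGiven_iff`).

Boundaries are blankets. By positivity the law of `(A, V)` is equivalent to a product measure. If
a variable equals both `F(A, V_J)` and `G(A, V_K)` almost surely, then under the product measure the
coordinates outside `K` may be replaced by an independent copy, which leaves `G` unchanged; freezing
a generic value of the copy turns `F` into a function of `(A, V_{J ∩ K})`
(`aestronglyMeasurable_inter`). Hence blankets are closed under intersection, and, there being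
finitely many, `R` and `C` are blankets. For `R`, the remaining dependence on `A` is removed by
`aestronglyMeasurable_of_eq_on_level`: an identity between functions of `V` that holds on a non-null
event `{A = a}` holds almost surely.

Control (`arm_control`). Contraction of `Y_a ⊥⊥ A | V` with `A ⊥⊥ V | V_R` gives `Y_a ⊥⊥ A | V_R`, so
`P(Y_a ∈ B | V_R) = P(Y_a ∈ B | A, V_R)`. By consistency, on `{A = a}` this is
`P(Y ∈ B | A, V_R)`, a function of `(A, V_C)`. If `P(A = a) > 0`, positivity makes
`P(Y_a ∈ B | V_R)` a function of `V_C` everywhere, and a second contraction yields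
`Y_a ⊥⊥ A | V_C`. If `P(A = a) = 0`, then `A` is almost surely constant and the claim is trivial.
-/

open MeasureTheory ProbabilityTheory

/-- `X ⊥⊥ Y | W` under `μ`: conditional independence of the random elements `X` and `Y`
given the σ-algebra generated by the random element `W`. -/
def CondIndepGiven {Ω α β γ : Type*} [mΩ : MeasurableSpace Ω] [StandardBorelSpace Ω]
    [MeasurableSpace α] [MeasurableSpace β] [MeasurableSpace γ]
    (μ : Measure Ω) [IsFiniteMeasure μ]
    (X : Ω → α) (Y : Ω → β) (W : Ω → γ) : Prop :=
  ∃ hle : MeasurableSpace.comap W inferInstance ≤ mΩ,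
    CondIndepFun (MeasurableSpace.comap W inferInstance) hle X Y μ

/-- The subvector `(V_i)_{i ∈ J}` of a family of random variables. -/
def subvec {Ω I : Type*} (V : I → Ω → ℝ) (J : Set I) : Ω → (J → ℝ) :=
  fun ω j => V j ω

/-- The joint law of `(V_i)_{i ∈ I}` is absolutely continuous w.r.t. the product
`⨂_{i ∈ I} P_{V_i}` of its one-dimensional marginal laws, with a density that is positive
almost everywhere. -/
def PositiveFamilyDensity {Ω I : Type*} [MeasurableSpace Ω] [Fintype I]
    (μ : Measure Ω) (V : I → Ω → ℝ) : Prop :=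
  μ.map (fun ω i => V i ω) ≪ Measure.pi (fun i => μ.map (V i)) ∧
    ∀ᵐ x ∂(Measure.pi fun i => μ.map (V i)),
      0 < (μ.map (fun ω i => V i ω)).rnDeriv (Measure.pi fun i => μ.map (V i)) x

/-- The joint law of `(W, (V_i)_{i ∈ I})` is absolutely continuous w.r.t. the product
`P_W ⊗ ⨂_{i ∈ I} P_{V_i}` of its one-dimensional marginal laws, with a density that is
positive almost everywhere. -/
def PositivePairDensity {Ω α I : Type*} [MeasurableSpace Ω] [MeasurableSpace α] [Fintype I]
    (μ : Measure Ω) (W : Ω → α) (V : I → Ω → ℝ) : Prop :=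
  μ.map (fun ω => (W ω, fun i => V i ω)) ≪ (μ.map W).prod (Measure.pi fun i => μ.map (V i)) ∧
    ∀ᵐ x ∂((μ.map W).prod (Measure.pi fun i => μ.map (V i))),
      0 < (μ.map (fun ω => (W ω, fun i => V i ω))).rnDeriv
            ((μ.map W).prod (Measure.pi fun i => μ.map (V i))) x

/-- The joint law of `(W, U, (V_i)_{i ∈ I})` is absolutely continuous w.r.t. the product
`P_W ⊗ P_U ⊗ ⨂_{i ∈ I} P_{V_i}` of its one-dimensional marginal laws, with a density that is
positive almost everywhere. -/
def PositiveTripleDensity {Ω I : Type*} [MeasurableSpace Ω] [Fintype I]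
    (μ : Measure Ω) (W U : Ω → ℝ) (V : I → Ω → ℝ) : Prop :=
  μ.map (fun ω => (W ω, U ω, fun i => V i ω)) ≪
      (μ.map W).prod ((μ.map U).prod (Measure.pi fun i => μ.map (V i))) ∧
    ∀ᵐ x ∂((μ.map W).prod ((μ.map U).prod (Measure.pi fun i => μ.map (V i)))),
      0 < (μ.map (fun ω => (W ω, U ω, fun i => V i ω))).rnDeriv
            ((μ.map W).prod ((μ.map U).prod (Measure.pi fun i => μ.map (V i)))) x

/-- `J ∈ 𝔯_A(V)`: `J` is a treatment Markov blanket of the family `V`,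
i.e. `A ⊥⊥ V_{I∖J} | V_J`. -/
def IsTreatBlanket {Ω I : Type*} [MeasurableSpace Ω] [StandardBorelSpace Ω]
    (μ : Measure Ω) [IsFiniteMeasure μ] (A : Ω → ℝ) (V : I → Ω → ℝ) (J : Set I) : Prop :=
  CondIndepGiven μ A (subvec V (Set.univ \ J)) (subvec V J)

/-- `J ∈ 𝔯_{Y|A}(V)`: `J` is an outcome Markov blanket of the family `V`,
i.e. `Y ⊥⊥ V_{I∖J} | (A, V_J)`. -/
def IsOutBlanket {Ω I : Type*} [MeasurableSpace Ω] [StandardBorelSpace Ω]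
    (μ : Measure Ω) [IsFiniteMeasure μ] (A Y : Ω → ℝ) (V : I → Ω → ℝ) (J : Set I) : Prop :=
  CondIndepGiven μ Y (subvec V (Set.univ \ J)) (fun ω => (A ω, subvec V J ω))

/-- `R_A(V_J)`: the treatment Markov boundary of the subfamily `(V_i)_{i ∈ J}`, i.e. the
intersection of all `J' ⊆ J` such that `A ⊥⊥ V_{J∖J'} | V_{J'}`. -/
def treatBoundary {Ω I : Type*} [MeasurableSpace Ω] [StandardBorelSpace Ω]
    (μ : Measure Ω) [IsFiniteMeasure μ] (A : Ω → ℝ) (V : I → Ω → ℝ) (J : Set I) : Set I :=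
  ⋂₀ {J' : Set I | J' ⊆ J ∧ CondIndepGiven μ A (subvec V (J \ J')) (subvec V J')}

/-- `R_{Y|A}(V_J)`: the outcome Markov boundary of the subfamily `(V_i)_{i ∈ J}`, i.e. the
intersection of all `J' ⊆ J` such that `Y ⊥⊥ V_{J∖J'} | (A, V_{J'})`. -/
def outBoundary {Ω I : Type*} [MeasurableSpace Ω] [StandardBorelSpace Ω]
    (μ : Measure Ω) [IsFiniteMeasure μ] (A Y : Ω → ℝ) (V : I → Ω → ℝ) (J : Set I) : Set I :=
  ⋂₀ {J' : Set I | J' ⊆ J ∧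
        CondIndepGiven μ Y (subvec V (J \ J')) (fun ω => (A ω, subvec V J' ω))}

/-- `A` is a binary treatment taking values in `{0, 1}`. -/
def IsBinary {Ω : Type*} (A : Ω → ℝ) : Prop :=
  ∀ ω, A ω = 0 ∨ A ω = 1

/-- Consistency of the observed outcome `Y` with the potential outcomes `Y₀, Y₁`:
`Y = Y₁` a.s. on `{A = 1}` and `Y = Y₀` a.s. on `{A = 0}`. -/
def Consistency {Ω : Type*} [MeasurableSpace Ω] (μ : Measure Ω) (A Y Y0 Y1 : Ω → ℝ) : Prop :=
  (∀ᵐ ω ∂μ, A ω = 1 → Y ω = Y1 ω) ∧ (∀ᵐ ω ∂μ, A ω = 0 → Y ω = Y0 ω)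

/-- The random vector `C` controls for confounding: `Y_a ⊥⊥ A | C` for `a = 0, 1`. -/
def ControlsConfounding {Ω γ : Type*} [MeasurableSpace Ω] [StandardBorelSpace Ω]
    [MeasurableSpace γ] (μ : Measure Ω) [IsFiniteMeasure μ]
    (A Y0 Y1 : Ω → ℝ) (C : Ω → γ) : Prop :=
  CondIndepGiven μ Y0 A C ∧ CondIndepGiven μ Y1 A C

/-! ### Conditional independence in one-sided form -/

lemma isPiSystem_inter_of_measurable {Ω : Type*} (m m' : MeasurableSpace Ω) :
    IsPiSystem {t | ∃ a b, MeasurableSet[m] a ∧ MeasurableSet[m'] b ∧ t = a ∩ b} := by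
  rintro _ ⟨a, b, ha, hb, rfl⟩ _ ⟨c, d, hc, hd, rfl⟩ -
  exact ⟨a ∩ c, b ∩ d, ha.inter hc, hb.inter hd, by ext; simp; tauto⟩

lemma sup_eq_generateFrom_inter {Ω : Type*} (m m' : MeasurableSpace Ω) :
    m ⊔ m' = MeasurableSpace.generateFrom
      {t | ∃ a b, MeasurableSet[m] a ∧ MeasurableSet[m'] b ∧ t = a ∩ b} := by
  apply le_antisymm
  · refine sup_le (fun a ha => ?_) (fun b hb => ?_)
    · exact MeasurableSpace.measurableSet_generateFrom ⟨a, Set.univ, ha, .univ, by simp⟩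
    · exact MeasurableSpace.measurableSet_generateFrom ⟨Set.univ, b, .univ, hb, by simp⟩
  · refine MeasurableSpace.generateFrom_le ?_
    rintro _ ⟨a, b, ha, hb, rfl⟩
    exact MeasurableSet.inter ((le_sup_left : m ≤ m ⊔ m') _ ha)
      ((le_sup_right : m' ≤ m ⊔ m') _ hb)

lemma integrable_indicator_one {Ω : Type*} {mΩ : MeasurableSpace Ω} (μ : Measure Ω)
    [IsFiniteMeasure μ] {s : Set Ω} (hs : MeasurableSet s) :
    Integrable (s.indicator fun _ => (1 : ℝ)) μ :=
  (integrable_const 1).indicator hs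

/-- Conditional independence in one-sided form: `m₁ ⊥⊥ m₂ | m'` iff conditioning an event of `m₁`
on `m₂` in addition to `m'` does not change its conditional probability. -/
lemma condIndep_iff_condExp_sup {Ω : Type*} {m' m₁ m₂ mΩ : MeasurableSpace Ω}
    [StandardBorelSpace Ω] (μ : Measure Ω) [IsFiniteMeasure μ]
    (hm' : m' ≤ mΩ) (h₁ : m₁ ≤ mΩ) (h₂ : m₂ ≤ mΩ) :
    CondIndep m' m₁ m₂ hm' μ ↔
      ∀ s, MeasurableSet[m₁] s → μ⟦s | m' ⊔ m₂⟧ =ᵐ[μ] μ⟦s | m'⟧ := by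
  have hsup : m' ⊔ m₂ ≤ mΩ := sup_le hm' h₂
  rw [condIndep_iff m' m₁ m₂ hm' h₁ h₂]
  constructor
  · intro h s hs
    have hsi : Integrable (s.indicator fun _ => (1 : ℝ)) μ := integrable_indicator_one μ (h₁ _ hs)
    have hgi : Integrable (μ⟦s | m'⟧) μ := integrable_condExp
    refine (ae_eq_condExp_of_forall_setIntegral_eq hsup hsi
      (fun _ _ _ => hgi.integrableOn) ?_ ?_).symm
    · intro t ht _
      refine MeasurableSpace.induction_on_inter
        (C := fun t _ => ∫ x in t, (μ⟦s | m'⟧) x ∂μ = ∫ x in t, s.indicator (fun _ => (1 : ℝ)) x ∂μ)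
        (sup_eq_generateFrom_inter m' m₂) (isPiSystem_inter_of_measurable m' m₂)
        (by simp) ?_ ?_ ?_ t ht
      · rintro _ ⟨a, b, ha, hb, rfl⟩
        have hb' := h₂ _ hb
        have hbi : Integrable (b.indicator fun _ => (1 : ℝ)) μ := integrable_indicator_one μ hb'
        have e1 : (μ⟦s | m'⟧) * b.indicator (fun _ => (1 : ℝ)) = b.indicator (μ⟦s | m'⟧) := by
          ext x; by_cases hx : x ∈ b <;> simp [hx]
        have hmi : Integrable ((μ⟦s | m'⟧) * b.indicator fun _ => (1 : ℝ)) μ := by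
          rw [e1]; exact hgi.indicator hb'
        have e2 := condExp_mul_of_stronglyMeasurable_left (m := m')
          (stronglyMeasurable_condExp : StronglyMeasurable[m'] (μ⟦s | m'⟧)) hmi hbi
        have e3 := h s b hs hb
        calc ∫ x in a ∩ b, (μ⟦s | m'⟧) x ∂μ
            = ∫ x in a, ((μ⟦s | m'⟧) * b.indicator fun _ => (1 : ℝ)) x ∂μ := by
              rw [e1, setIntegral_indicator hb']
          _ = ∫ x in a, (μ[(μ⟦s | m'⟧) * b.indicator (fun _ => (1 : ℝ)) | m']) x ∂μ :=
              (setIntegral_condExp hm' hmi ha).symm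
          _ = ∫ x in a, (μ⟦s ∩ b | m'⟧) x ∂μ :=
              setIntegral_congr_ae (hm' _ ha) ((e2.trans e3.symm).mono fun x hx _ => hx)
          _ = ∫ x in a, (s ∩ b).indicator (fun _ => (1 : ℝ)) x ∂μ :=
              setIntegral_condExp hm' (integrable_indicator_one μ ((h₁ _ hs).inter hb')) ha
          _ = ∫ x in a ∩ b, s.indicator (fun _ => (1 : ℝ)) x ∂μ := by
              rw [← setIntegral_indicator hb', Set.indicator_indicator, Set.inter_comm]
      · intro t ht ih
        have ht' := hsup _ ht
        rw [setIntegral_compl ht' hgi, setIntegral_compl ht' hsi, ih, integral_condExp hm']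
      · intro f hd hf ih
        rw [integral_iUnion (fun i => hsup _ (hf i)) hd hgi.integrableOn,
          integral_iUnion (fun i => hsup _ (hf i)) hd hsi.integrableOn]
        simp_rw [ih]
    · have hg : StronglyMeasurable[m'] (μ⟦s | m'⟧) := stronglyMeasurable_condExp
      exact ⟨_, hg.mono le_sup_left, ae_eq_rfl⟩
  · intro h s t hs ht
    have hs' := h₁ _ hs
    have ht' := h₂ _ ht
    have hsi : Integrable (s.indicator fun _ => (1 : ℝ)) μ := integrable_indicator_one μ hs'
    have hti : Integrable (t.indicator fun _ => (1 : ℝ)) μ := integrable_indicator_one μ ht'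
    have hgi : Integrable (μ⟦s | m'⟧) μ := integrable_condExp
    have e1 : (μ⟦s | m'⟧) * t.indicator (fun _ => (1 : ℝ)) = t.indicator (μ⟦s | m'⟧) := by
      ext x; by_cases hx : x ∈ t <;> simp [hx]
    have e4 : t.indicator (s.indicator fun _ => (1 : ℝ)) = (s ∩ t).indicator fun _ => (1 : ℝ) := by
      rw [Set.indicator_indicator, Set.inter_comm]
    have hmi : Integrable ((μ⟦s | m'⟧) * t.indicator fun _ => (1 : ℝ)) μ := by
      rw [e1]; exact hgi.indicator ht'
    have e2 := condExp_mul_of_stronglyMeasurable_left (m := m')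
      (stronglyMeasurable_condExp : StronglyMeasurable[m'] (μ⟦s | m'⟧)) hmi hti
    have e3 : μ⟦s ∩ t | m' ⊔ m₂⟧ =ᵐ[μ] t.indicator (μ⟦s | m'⟧) := by
      have := condExp_indicator hsi ((le_sup_right : m₂ ≤ m' ⊔ m₂) _ ht)
      rw [e4] at this
      refine this.trans ?_
      filter_upwards [h s hs] with x hx
      by_cases hxt : x ∈ t <;> simp [hxt, hx]
    calc μ⟦s ∩ t | m'⟧ =ᵐ[μ] μ[μ⟦s ∩ t | m' ⊔ m₂⟧ | m'] :=
          (condExp_condExp_of_le le_sup_left hsup).symm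
      _ =ᵐ[μ] μ[t.indicator (μ⟦s | m'⟧) | m'] := condExp_congr_ae e3
      _ =ᵐ[μ] _ := by rw [← e1]; exact e2

/-- If some version of `P(s | M)` is `m'`-measurable for every `s ∈ m₁`, where `M ⊇ m' ⊔ m₂`, then
`m₁ ⊥⊥ m₂ | m'`. -/
lemma condIndep_of_aestronglyMeasurable {Ω : Type*} {m' m₁ m₂ M mΩ : MeasurableSpace Ω}
    [StandardBorelSpace Ω] (μ : Measure Ω) [IsFiniteMeasure μ]
    (hm' : m' ≤ mΩ) (h₁ : m₁ ≤ mΩ) (hM : M ≤ mΩ) (hle : m' ⊔ m₂ ≤ M)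
    (h : ∀ s, MeasurableSet[m₁] s → AEStronglyMeasurable[m'] (μ⟦s | M⟧) μ) :
    CondIndep m' m₁ m₂ hm' μ := by
  have h₂ : m₂ ≤ mΩ := le_sup_right.trans (hle.trans hM)
  rw [condIndep_iff_condExp_sup μ hm' h₁ h₂]
  intro s hs
  have key : ∀ n : MeasurableSpace Ω, m' ≤ n → n ≤ M → μ⟦s | n⟧ =ᵐ[μ] μ⟦s | M⟧ := by
    intro n hn hnM
    refine (condExp_condExp_of_le hnM hM).symm.trans ?_
    exact condExp_of_aestronglyMeasurable' (hnM.trans hM) ((h s hs).mono hn) integrable_condExp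
  exact (key _ le_sup_left hle).trans (key _ le_rfl (le_sup_left.trans hle)).symm

/-- Contraction: if `m₁ ⊥⊥ m₂ | M` and `m₁ ⊥⊥ M | m'` with `m' ⊆ M`, then `m₁ ⊥⊥ m₂ | m'`. The
second independence enters as `m'`-measurability of the conditional probabilities given `M`. -/
lemma condIndep_contraction {Ω : Type*} {m' m₁ m₂ M mΩ : MeasurableSpace Ω}
    [StandardBorelSpace Ω] (μ : Measure Ω) [IsFiniteMeasure μ]
    (hm' : m' ≤ M) (h₁ : m₁ ≤ mΩ) (h₂ : m₂ ≤ mΩ) (hM : M ≤ mΩ)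
    (h : CondIndep M m₁ m₂ hM μ)
    (h' : ∀ s, MeasurableSet[m₁] s → AEStronglyMeasurable[m'] (μ⟦s | M⟧) μ) :
    CondIndep m' m₁ m₂ (hm'.trans hM) μ := by
  refine condIndep_of_aestronglyMeasurable μ (hm'.trans hM) h₁ (sup_le hM h₂)
    (sup_le_sup_right hm' _) fun s hs => ?_
  exact (h' s hs).congr ((condIndep_iff_condExp_sup μ hM h₁ h₂).1 h s hs).symm

/-! ### σ-algebras of subvectors -/

lemma comap_subvec_mono {Ω I : Type*} (V : I → Ω → ℝ) {J K : Set I} (h : J ⊆ K) :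
    MeasurableSpace.comap (subvec V J) inferInstance
      ≤ MeasurableSpace.comap (subvec V K) inferInstance := by
  have : subvec V J = (fun (x : K → ℝ) (j : J) => x ⟨j, h j.2⟩) ∘ subvec V K := rfl
  rw [this, ← MeasurableSpace.comap_comp]
  exact MeasurableSpace.comap_mono (by
    rw [← measurable_iff_comap_le]; fun_prop)

lemma comap_subvec_le {Ω I : Type*} {mΩ : MeasurableSpace Ω} {V : I → Ω → ℝ}
    (hV : ∀ i, Measurable (V i)) (J : Set I) :
    MeasurableSpace.comap (subvec V J) inferInstance ≤ mΩ :=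
  measurable_iff_comap_le.1 (measurable_pi_lambda _ fun j => hV j)

lemma comap_subvec_sup_diff {Ω I : Type*} (V : I → Ω → ℝ) {J K : Set I} (h : J ⊆ K) :
    MeasurableSpace.comap (subvec V J) inferInstance ⊔
      MeasurableSpace.comap (subvec V (K \ J)) inferInstance
      = MeasurableSpace.comap (subvec V K) inferInstance := by
  classical
  refine le_antisymm (sup_le (comap_subvec_mono V h) (comap_subvec_mono V Set.sdiff_subset)) ?_
  rw [← MeasurableSpace.comap_prodMk, ← measurable_iff_comap_le]
  have hm := comap_measurable (m := inferInstance) (fun ω => (subvec V J ω, subvec V (K \ J) ω))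
  refine @measurable_pi_lambda _ _ _ (_) _ _ fun k => ?_
  by_cases hk : (k : I) ∈ J
  · exact (measurable_pi_apply (⟨k, hk⟩ : J)).comp (measurable_fst.comp hm)
  · exact (measurable_pi_apply (⟨k, k.2, hk⟩ : (K \ J : Set I))).comp (measurable_snd.comp hm)

/-! ### Consequences of positivity -/

/-- Overwriting the coordinates outside `J` by those of an independent copy preserves a product
of probability measures. -/
lemma measurePreserving_piecewise {I : Type*} [Fintype I] (ρ : I → Measure ℝ)
    [∀ i, IsProbabilityMeasure (ρ i)] (J : Set I) [DecidablePred (· ∈ J)] :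
    MeasurePreserving (fun p : (I → ℝ) × (I → ℝ) => J.piecewise p.1 p.2)
      ((Measure.pi ρ).prod (Measure.pi ρ)) (Measure.pi ρ) := by
  have hmeas : Measurable (fun p : (I → ℝ) × (I → ℝ) => J.piecewise p.1 p.2) := by
    refine measurable_pi_lambda _ fun i => ?_
    by_cases hi : i ∈ J <;> simp only [Set.piecewise, hi, if_true, if_false] <;> fun_prop
  refine ⟨hmeas, (Measure.pi_eq fun s hs => ?_).symm⟩
  rw [Measure.map_apply hmeas (MeasurableSet.univ_pi hs)]
  have : (fun p : (I → ℝ) × (I → ℝ) => J.piecewise p.1 p.2) ⁻¹' (Set.univ.pi s)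
      = (Set.univ.pi fun i => if i ∈ J then s i else Set.univ) ×ˢ
        (Set.univ.pi fun i => if i ∈ J then Set.univ else s i) := by
    ext ⟨x, y⟩
    simp only [Set.mem_preimage, Set.mem_univ_pi, Set.mem_prod, ← forall_and]
    refine forall_congr' fun i => ?_
    by_cases hi : i ∈ J <;> simp [hi]
  rw [this, Measure.prod_prod, Measure.pi_pi, Measure.pi_pi, ← Finset.prod_mul_distrib]
  refine Finset.prod_congr rfl fun i _ => ?_
  by_cases hi : i ∈ J <;> simp [hi]

section Positivity

variable {Ω I : Type*} [mΩ : MeasurableSpace Ω] [Fintype I] {μ : Measure Ω}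
  {A : Ω → ℝ} {V : I → Ω → ℝ}

lemma PositivePairDensity.prod_absolutelyContinuous [IsProbabilityMeasure μ]
    (hpos : PositivePairDensity μ A V) :
    (μ.map A).prod (Measure.pi fun i => μ.map (V i)) ≪ μ.map (fun ω => (A ω, fun i => V i ω)) := by
  obtain ⟨h1, h2⟩ := hpos
  rw [← Measure.withDensity_rnDeriv_eq _ _ h1]
  exact withDensity_absolutelyContinuous' (Measure.measurable_rnDeriv _ _).aemeasurable
    (h2.mono fun x hx => hx.ne')

lemma exists_eq_comp_of_aestronglyMeasurable_comap {γ : Type*} [MeasurableSpace γ]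
    {X : Ω → γ} {f : Ω → ℝ}
    (hf : AEStronglyMeasurable[MeasurableSpace.comap X inferInstance] f μ) :
    ∃ g : γ → ℝ, Measurable g ∧ f =ᵐ[μ] g ∘ X := by
  obtain ⟨f', hf', hff'⟩ := hf
  obtain ⟨g, hg, rfl⟩ := hf'.measurable.exists_eq_measurable_comp
  exact ⟨g, hg, hff'⟩

lemma aestronglyMeasurable_comap_of_ae_eq {γ : Type*} [MeasurableSpace γ]
    {X : Ω → γ} {f : Ω → ℝ} {g : γ → ℝ} (hg : Measurable g) (h : f =ᵐ[μ] g ∘ X) :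
    AEStronglyMeasurable[MeasurableSpace.comap X inferInstance] f μ :=
  ⟨g ∘ X, (hg.comp (comap_measurable X)).stronglyMeasurable, h⟩

/-- Under positivity, a function of `V` that agrees with a function of `(A, V_J)` on a
non-null event `{A = a}` is almost surely a function of `V_J`: positivity lets the identity
propagate from `{A = a}` to all of `Ω`. -/
lemma aestronglyMeasurable_of_eq_on_level [IsProbabilityMeasure μ] (hA : Measurable A)
    (hV : ∀ i, Measurable (V i))
    (hpos : PositivePairDensity μ A V) {J : Set I} {a : ℝ} (ha : μ (A ⁻¹' {a}) ≠ 0)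
    {f g : Ω → ℝ}
    (hf : AEStronglyMeasurable[MeasurableSpace.comap (subvec V Set.univ) inferInstance] f μ)
    (hg : AEStronglyMeasurable[MeasurableSpace.comap (fun ω => (A ω, subvec V J ω))
      inferInstance] g μ)
    (hfg : ∀ᵐ ω ∂μ, A ω = a → f ω = g ω) :
    AEStronglyMeasurable[MeasurableSpace.comap (subvec V J) inferInstance] f μ := by
  obtain ⟨F, hF, hfF⟩ := exists_eq_comp_of_aestronglyMeasurable_comap hf
  obtain ⟨G, hG, hgG⟩ := exists_eq_comp_of_aestronglyMeasurable_comap hg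
  have : ∀ i, IsProbabilityMeasure (μ.map (V i)) :=
    fun i => Measure.isProbabilityMeasure_map (hV i).aemeasurable
  have : IsProbabilityMeasure (μ.map A) := Measure.isProbabilityMeasure_map hA.aemeasurable
  have hAV : Measurable (fun ω => (A ω, fun i => V i ω)) := by fun_prop
  have hVm : Measurable (fun ω i => V i ω) := by fun_prop
  set N : Set (I → ℝ) := {x | F (fun i => x i) ≠ G (a, fun j => x j)} with hN
  have hNm : MeasurableSet N := (measurableSet_eq_fun (by fun_prop) (by fun_prop)).compl
  have h0 : μ.map (fun ω => (A ω, fun i => V i ω)) ({a} ×ˢ N) = 0 := by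
    rw [Measure.map_apply hAV ((measurableSet_singleton a).prod hNm)]
    rw [measure_eq_zero_iff_ae_notMem]
    filter_upwards [hfF, hgG, hfg] with ω h1 h2 h3
    rintro ⟨hAa, hn⟩
    have hAa : A ω = a := hAa
    refine hn ?_
    have := h3 hAa
    rw [h1, h2] at this
    simp only [Function.comp_apply, hAa] at this
    exact this
  have h1 := hpos.prod_absolutelyContinuous h0
  rw [Measure.prod_prod, Measure.map_apply hA (measurableSet_singleton a), mul_eq_zero] at h1
  have h2 : (Measure.pi fun i => μ.map (V i)) N = 0 := h1.resolve_left ha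
  have h3 : μ.map (fun ω => (A ω, fun i => V i ω)) (Set.univ ×ˢ N) = 0 :=
    hpos.1 (by rw [Measure.prod_prod, h2, mul_zero])
  rw [Measure.map_apply hAV (MeasurableSet.univ.prod hNm), measure_eq_zero_iff_ae_notMem] at h3
  refine aestronglyMeasurable_comap_of_ae_eq (g := fun x => G (a, x)) (by fun_prop) ?_
  filter_upwards [hfF, h3] with ω h4 h5
  rw [h4]
  by_contra hne
  exact h5 ⟨trivial, hne⟩

/-- Under positivity, a random variable that is almost surely a function of `(A, V_J)` and also
of `(A, V_K)` is almost surely a function of `(A, V_{J ∩ K})`. -/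
lemma aestronglyMeasurable_inter [IsProbabilityMeasure μ] (hA : Measurable A)
    (hV : ∀ i, Measurable (V i))
    (hpos : PositivePairDensity μ A V) {J K : Set I} {f : Ω → ℝ}
    (hJ : AEStronglyMeasurable[MeasurableSpace.comap (fun ω => (A ω, subvec V J ω))
      inferInstance] f μ)
    (hK : AEStronglyMeasurable[MeasurableSpace.comap (fun ω => (A ω, subvec V K ω))
      inferInstance] f μ) :
    AEStronglyMeasurable[MeasurableSpace.comap (fun ω => (A ω, subvec V (J ∩ K) ω))
      inferInstance] f μ := by
  classical
  obtain ⟨F, hF, hfF⟩ := exists_eq_comp_of_aestronglyMeasurable_comap hJ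
  obtain ⟨G, hG, hfG⟩ := exists_eq_comp_of_aestronglyMeasurable_comap hK
  have : ∀ i, IsProbabilityMeasure (μ.map (V i)) :=
    fun i => Measure.isProbabilityMeasure_map (hV i).aemeasurable
  have : IsProbabilityMeasure (μ.map A) := Measure.isProbabilityMeasure_map hA.aemeasurable
  have hAV : Measurable (fun ω => (A ω, fun i => V i ω)) := by fun_prop
  set π : Measure (I → ℝ) := Measure.pi fun i => μ.map (V i) with hπ
  set ν := (μ.map A).prod π with hν
  have hFG : ∀ᵐ p ∂ν, F (p.1, fun j => p.2 j) = G (p.1, fun j => p.2 j) := by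
    refine hpos.prod_absolutelyContinuous.ae_le ?_
    refine (ae_map_iff hAV.aemeasurable
      (measurableSet_eq_fun (by fun_prop) (by fun_prop))).2 ?_
    filter_upwards [hfF, hfG] with ω h1 h2
    exact h1.symm.trans h2
  -- `(y, (a, x)) ↦ (a, x_K ∪ y_{Kᶜ})` carries `π ⊗ ν` to `ν`.
  have hT : MeasurePreserving (fun q : (I → ℝ) × (ℝ × (I → ℝ)) =>
      (q.2.1, K.piecewise q.2.2 q.1)) (π.prod ν) ν :=
    ((MeasurePreserving.id (μ.map A)).prod
      (measurePreserving_piecewise (fun i => μ.map (V i)) K)).comp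
      ((measurePreserving_prodAssoc (μ.map A) π π).comp Measure.measurePreserving_swap)
  have h1 := hT.quasiMeasurePreserving.ae hFG
  obtain ⟨y, hy⟩ := (Measure.ae_ae_of_ae_prod h1).exists
  -- The `K`-coordinates of the modified point are those of `x`, so for this frozen `y` the
  -- value `G(a, x_K)` is a function of `(a, x_{J ∩ K})`.
  have hy' := ae_of_ae_map hAV.aemeasurable (hpos.1.ae_le hy)
  refine aestronglyMeasurable_comap_of_ae_eq (g := fun p : ℝ × ((J ∩ K : Set I) → ℝ) =>
    F (p.1, fun j => if h : (j : I) ∈ K then p.2 ⟨j, j.2, h⟩ else y j)) ?_ ?_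
  · refine hF.comp (measurable_fst.prodMk (measurable_pi_lambda _ fun j => ?_))
    by_cases h : (j : I) ∈ K <;> simp only [h, dif_pos, dif_neg, not_false_eq_true] <;> fun_prop
  · filter_upwards [hfG, hy'] with ω h1 h2
    rw [h1]
    simp only [Function.comp_apply, subvec]
    have e1 : (fun j : K => K.piecewise (fun i => V i ω) y (j : I)) = fun j : K => V j ω := by
      ext j; simp
    have e2 : (fun j : J => K.piecewise (fun i => V i ω) y (j : I))
        = fun j : J => if h : (j : I) ∈ K then V j ω else y j := by
      ext j; by_cases h : (j : I) ∈ K <;> simp [h]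
    rw [e1, e2] at h2
    exact h2.symm

end Positivity

/-- `X ⊥⊥ U | W` holds iff every `P(X ∈ B | W, U)` has a `σ(W)`-measurable version. Here `M` is
any description of `σ(W, U)`. -/
lemma condIndepGiven_iff {Ω α β γ : Type*} {M : MeasurableSpace Ω}
    [mΩ : MeasurableSpace Ω] [StandardBorelSpace Ω] [MeasurableSpace α] [MeasurableSpace β] [MeasurableSpace γ]
    {μ : Measure Ω} [IsFiniteMeasure μ] {X : Ω → α} {U : Ω → β} {W : Ω → γ}
    (hX : Measurable X) (hU : Measurable U) (hW : Measurable W)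
    (hM : MeasurableSpace.comap W inferInstance ⊔ MeasurableSpace.comap U inferInstance = M) :
    CondIndepGiven μ X U W ↔ ∀ s, MeasurableSet[MeasurableSpace.comap X inferInstance] s →
      AEStronglyMeasurable[MeasurableSpace.comap W inferInstance] (μ⟦s | M⟧) μ := by
  have hW' := measurable_iff_comap_le.1 hW
  have hX' := measurable_iff_comap_le.1 hX
  have hU' := measurable_iff_comap_le.1 hU
  subst hM
  constructor
  · rintro ⟨hle, h⟩ s hs
    rw [condIndepFun_iff_condIndep] at h
    have := (condIndep_iff_condExp_sup μ hW' hX' hU').1 h s hs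
    exact ⟨_, stronglyMeasurable_condExp, this⟩
  · intro h
    refine ⟨hW', ?_⟩
    rw [condIndepFun_iff_condIndep]
    exact condIndep_of_aestronglyMeasurable μ hW' hX' (sup_le hW' hU') le_rfl h

/-- A predicate on sets that is closed under binary intersections and satisfied somewhere
passes to the intersection of all the sets satisfying it. -/
lemma sInter_mem_of_inter_closed {I : Type*} [Finite I] {S : Set (Set I)} (hne : S.Nonempty)
    (h : ∀ J ∈ S, ∀ K ∈ S, J ∩ K ∈ S) : ⋂₀ S ∈ S := by
  have hc : InfClosed S := fun J hJ K hK => h J hJ K hK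
  exact hc.sInf_mem_of_nonempty (Set.toFinite S) hne le_rfl

lemma measurable_subvec {Ω I : Type*} [MeasurableSpace Ω] {V : I → Ω → ℝ}
    (hV : ∀ i, Measurable (V i)) (J : Set I) : Measurable (subvec V J) :=
  measurable_pi_lambda _ fun j => hV j

lemma comap_prod_subvec {Ω I : Type*} (A : Ω → ℝ) (V : I → Ω → ℝ) (J : Set I) :
    MeasurableSpace.comap (fun ω => (A ω, subvec V J ω)) inferInstance
      = MeasurableSpace.comap A inferInstance ⊔
        MeasurableSpace.comap (subvec V J) inferInstance :=
  MeasurableSpace.comap_prodMk _ _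

lemma exists_level_ne_zero {Ω : Type*} [MeasurableSpace Ω] {μ : Measure Ω}
    [IsProbabilityMeasure μ] {A : Ω → ℝ} (hbin : IsBinary A) : ∃ a : ℝ, μ (A ⁻¹' {a}) ≠ 0 := by
  by_contra! h
  have : (Set.univ : Set Ω) ⊆ A ⁻¹' {0} ∪ A ⁻¹' {1} := fun ω _ => hbin ω
  have h0 : μ Set.univ = 0 := measure_mono_null this (measure_union_null (h 0) (h 1))
  simp at h0

/-! ### Markov boundaries and control for confounding -/

section Boundaries

variable {Ω I : Type*} [mΩ : MeasurableSpace Ω] [StandardBorelSpace Ω] [Fintype I]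
  {μ : Measure Ω} [IsProbabilityMeasure μ] {A Y : Ω → ℝ} {V : I → Ω → ℝ}

/-- Under positivity the treatment Markov boundary is itself a treatment Markov blanket. -/
lemma treatBoundary_blanket (hA : Measurable A) (hV : ∀ i, Measurable (V i))
    (hbin : IsBinary A) (hpos : PositivePairDensity μ A V) :
    ∀ s, MeasurableSet[MeasurableSpace.comap A inferInstance] s →
      AEStronglyMeasurable[MeasurableSpace.comap (subvec V (treatBoundary μ A V Set.univ))
        inferInstance] (μ⟦s | MeasurableSpace.comap (subvec V Set.univ) inferInstance⟧) μ := by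
  have hiff : ∀ J : Set I, _ := fun J => condIndepGiven_iff (μ := μ) hA
    (measurable_subvec hV (Set.univ \ J)) (measurable_subvec hV J)
    (comap_subvec_sup_diff V (Set.subset_univ J))
  obtain ⟨a, ha⟩ := exists_level_ne_zero (μ := μ) hbin
  have hmem : treatBoundary μ A V Set.univ ∈ {J' : Set I | J' ⊆ Set.univ ∧
      CondIndepGiven μ A (subvec V (Set.univ \ J')) (subvec V J')} := by
    refine sInter_mem_of_inter_closed ⟨Set.univ, subset_rfl, ?_⟩ ?_
    · exact (hiff _).2 fun s _ => ⟨_, stronglyMeasurable_condExp, ae_eq_rfl⟩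
    · rintro J ⟨-, hJ⟩ K ⟨-, hK⟩
      refine ⟨Set.subset_univ _, (hiff _).2 fun s hs => ?_⟩
      have hle : ∀ L : Set I, MeasurableSpace.comap (subvec V L) inferInstance ≤
          MeasurableSpace.comap (fun ω => (A ω, subvec V L ω)) inferInstance := fun L => by
        rw [comap_prod_subvec]; exact le_sup_right
      exact aestronglyMeasurable_of_eq_on_level hA hV hpos ha
        ⟨_, stronglyMeasurable_condExp, ae_eq_rfl⟩
        (aestronglyMeasurable_inter hA hV hpos (((hiff J).1 hJ s hs).mono (hle J))
          (((hiff K).1 hK s hs).mono (hle K))) (ae_of_all _ fun _ _ => rfl)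
  exact (hiff _).1 hmem.2

/-- Under positivity the outcome Markov boundary of `V_R` is itself an outcome Markov blanket
of `V_R`. -/
lemma outBoundary_blanket (hA : Measurable A) (hY : Measurable Y) (hV : ∀ i, Measurable (V i))
    (hpos : PositivePairDensity μ A V) (R : Set I) :
    outBoundary μ A Y V R ⊆ R ∧ ∀ s, MeasurableSet[MeasurableSpace.comap Y inferInstance] s →
      AEStronglyMeasurable[MeasurableSpace.comap
        (fun ω => (A ω, subvec V (outBoundary μ A Y V R) ω)) inferInstance]
        (μ⟦s | MeasurableSpace.comap (fun ω => (A ω, subvec V R ω)) inferInstance⟧) μ := by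
  have hiff : ∀ J : Set I, ∀ hJ : J ⊆ R, _ := fun J hJ => condIndepGiven_iff (μ := μ) hY
    (measurable_subvec hV (R \ J)) (hA.prodMk (measurable_subvec hV J))
    (M := MeasurableSpace.comap (fun ω => (A ω, subvec V R ω)) inferInstance) (by
      rw [comap_prod_subvec, comap_prod_subvec, sup_assoc, comap_subvec_sup_diff V hJ])
  have hmem : outBoundary μ A Y V R ∈ {J' : Set I | J' ⊆ R ∧
      CondIndepGiven μ Y (subvec V (R \ J')) (fun ω => (A ω, subvec V J' ω))} := by
    refine sInter_mem_of_inter_closed ⟨R, subset_rfl, ?_⟩ ?_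
    · exact (hiff _ subset_rfl).2 fun s _ => ⟨_, stronglyMeasurable_condExp, ae_eq_rfl⟩
    · rintro J ⟨hJR, hJ⟩ K ⟨hKR, hK⟩
      have hJK : J ∩ K ⊆ R := Set.inter_subset_left.trans hJR
      exact ⟨hJK, (hiff _ hJK).2 fun s hs =>
        aestronglyMeasurable_inter hA hV hpos ((hiff J hJR).1 hJ s hs) ((hiff K hKR).1 hK s hs)⟩
  exact ⟨hmem.1, (hiff _ hmem.1).1 hmem.2⟩

/-- An almost surely constant treatment is conditionally independent of everything. This covers the
arms of probability zero. -/
lemma condIndepGiven_of_ae_eq_const {γ : Type*} [MeasurableSpace γ] {Z : Ω → ℝ} {C : Ω → γ}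
    (hA : Measurable A) (hZ : Measurable Z) (hC : Measurable C) {b : ℝ}
    (hb : ∀ᵐ ω ∂μ, A ω = b) : CondIndepGiven μ Z A C := by
  have hC' := measurable_iff_comap_le.1 hC
  refine ⟨hC', CondIndepFun.symm ?_⟩
  rw [condIndepFun_iff_condIndep]
  refine condIndep_of_aestronglyMeasurable μ hC' (measurable_iff_comap_le.1 hA)
    (sup_le hC' (measurable_iff_comap_le.1 hZ)) le_rfl ?_
  rintro _ ⟨B, hB, rfl⟩
  have h : (A ⁻¹' B).indicator (fun _ => (1 : ℝ)) =ᵐ[μ]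
      fun _ => B.indicator (fun _ => (1 : ℝ)) b := by
    filter_upwards [hb] with ω hω
    have hmem : ω ∈ A ⁻¹' B ↔ b ∈ B := by rw [Set.mem_preimage, hω]
    by_cases hbB : b ∈ B
    · rw [Set.indicator_of_mem (hmem.2 hbB), Set.indicator_of_mem hbB]
    · rw [Set.indicator_of_notMem (mt hmem.1 hbB), Set.indicator_of_notMem hbB]
  refine ⟨fun _ => B.indicator (fun _ => (1 : ℝ)) b, stronglyMeasurable_const,
    (condExp_congr_ae h).trans ?_⟩
  rw [condExp_const (sup_le hC' (measurable_iff_comap_le.1 hZ))]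

/-- The claim for one arm `a`. By contraction `Z ⊥⊥ A | V_R`, so `P(Z ∈ B | V_R)` equals
`P(Z ∈ B | A, V_R)`, which on `{A = a}` equals `P(Y ∈ B | A, V_R)`, a function of
`(A, V_C)`; positivity makes `P(Z ∈ B | V_R)` a function of `V_C`, and
contraction applies once more. -/
lemma arm_control (hA : Measurable A) (hY : Measurable Y) {Z : Ω → ℝ} (hZ : Measurable Z)
    (hV : ∀ i, Measurable (V i)) (hbin : IsBinary A) (hpos : PositivePairDensity μ A V)
    {a b : ℝ} (hab : ∀ ω, A ω = a ∨ A ω = b) (hcons : ∀ᵐ ω ∂μ, A ω = a → Y ω = Z ω)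
    (hS : CondIndepGiven μ Z A (subvec V Set.univ)) :
    CondIndepGiven μ Z A
      (subvec V (outBoundary μ A Y V (treatBoundary μ A V Set.univ))) := by
  by_cases ha : μ (A ⁻¹' {a}) = 0
  · refine condIndepGiven_of_ae_eq_const hA hZ (measurable_subvec hV _) (b := b) ?_
    filter_upwards [measure_eq_zero_iff_ae_notMem.1 ha] with ω hω
    exact (hab ω).resolve_left hω
  have hR := treatBoundary_blanket hA hV hbin hpos
  set R := treatBoundary μ A V Set.univ
  obtain ⟨hCR, hC⟩ := outBoundary_blanket hA hY hV hpos R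
  set C := outBoundary μ A Y V R
  have hA' := measurable_iff_comap_le.1 hA
  have hZ' := measurable_iff_comap_le.1 hZ
  have hle := comap_subvec_le (mΩ := mΩ) hV
  obtain ⟨hU, hS⟩ := hS
  have hS := (condIndepFun_iff_condIndep _ _ _ _ _).1 hS.symm
  have hSR := (condIndep_contraction μ (comap_subvec_mono V (Set.subset_univ R)) hA' hZ' hU
    hS hR).symm
  refine ⟨hle C, ?_⟩
  rw [condIndepFun_iff_condIndep]
  refine condIndep_contraction μ (comap_subvec_mono V hCR) hZ' hA' (hle R) hSR ?_
  rintro _ ⟨B, hB, rfl⟩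
  have hf := (condIndep_iff_condExp_sup μ (hle R) hZ' hA').1 hSR (Z ⁻¹' B) ⟨B, hB, rfl⟩
  refine aestronglyMeasurable_of_eq_on_level hA hV hpos ha
    ⟨_, stronglyMeasurable_condExp.mono (comap_subvec_mono V (Set.subset_univ R)), ae_eq_rfl⟩
    (hC (Y ⁻¹' B) ⟨B, hB, rfl⟩) ?_
  rw [sup_comm, ← comap_prod_subvec] at hf
  have hD : MeasurableSet[MeasurableSpace.comap (fun ω => (A ω, subvec V R ω)) inferInstance]
      (A ⁻¹' {a}) := by
    rw [comap_prod_subvec]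
    exact (le_sup_left : _ ≤ _ ⊔ MeasurableSpace.comap (subvec V R) inferInstance) _
      ⟨{a}, measurableSet_singleton a, rfl⟩
  have h1 := condExp_indicator (integrable_indicator_one μ (hZ hB)) hD
  have h2 := condExp_indicator (integrable_indicator_one μ (hY hB)) hD
  have h3 : (A ⁻¹' {a}).indicator ((Z ⁻¹' B).indicator fun _ => (1 : ℝ)) =ᵐ[μ]
      (A ⁻¹' {a}).indicator ((Y ⁻¹' B).indicator fun _ => (1 : ℝ)) := by
    filter_upwards [hcons] with ω hω
    by_cases h : ω ∈ A ⁻¹' {a}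
    · have hmem : ω ∈ Z ⁻¹' B ↔ ω ∈ Y ⁻¹' B := by
        rw [Set.mem_preimage, Set.mem_preimage, hω h]
      rw [Set.indicator_of_mem h, Set.indicator_of_mem h]
      by_cases hY : ω ∈ Y ⁻¹' B
      · rw [Set.indicator_of_mem (hmem.2 hY), Set.indicator_of_mem hY]
      · rw [Set.indicator_of_notMem (mt hmem.1 hY), Set.indicator_of_notMem hY]
    · rw [Set.indicator_of_notMem h, Set.indicator_of_notMem h]
  filter_upwards [hf, h1, h2, condExp_congr_ae h3] with ω e0 e1 e2 e3 hω
  have hω' : ω ∈ A ⁻¹' {a} := hω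
  rw [← e0]
  rw [e1, e2] at e3
  simpa [Set.indicator_of_mem hω'] using e3

end Boundaries

/-- AY-sequential selection: `C_AY = R_{Y|A}(V_{R_A(V)})` controls for
confounding. -/
theorem AY_sequential_control
    {Ω I : Type*} [MeasurableSpace Ω] [StandardBorelSpace Ω] [Fintype I]
    (μ : Measure Ω) [IsProbabilityMeasure μ]
    (A Y Y0 Y1 : Ω → ℝ) (V : I → Ω → ℝ)
    (hA : Measurable A) (hY : Measurable Y) (hY0 : Measurable Y0) (hY1 : Measurable Y1)
    (hV : ∀ i, Measurable (V i))
    (hbin : IsBinary A)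
    (hcons : Consistency μ A Y Y0 Y1)
    (hS : ControlsConfounding μ A Y0 Y1 (subvec V Set.univ))
    (hpos : PositivePairDensity μ A V) :
    ControlsConfounding μ A Y0 Y1
      (subvec V (outBoundary μ A Y V (treatBoundary μ A V Set.univ))) := by
  exact ⟨arm_control hA hY hY0 hV hbin hpos hbin hcons.2 hS.1,
    arm_control hA hY hY1 hV hbin hpos (fun ω => (hbin ω).symm) hcons.1 hS.2⟩
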